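/- arXiv:2207.14035 — 3 statements merged into one kernel-verified Lean document; each statement's English description precedes it below -/
import Mathlib

section
/- Let A and Â be divisible abelian groups such that for every positive integer m the m-torsion subgroups satisfy A[m] ≅ (ℤ/mℤ)⁴ and Â[m] ≅ (ℤ/mℤ)⁴. Let φ_l : A → Â and φ_m : Â → A be group homomorphisms, let r, s, n be integers with n ≥ 1, set χ := n + r·s, and assume φ_m ∘ φ_l equals multiplication by −χ on A and φ_l ∘ φ_m equals multiplication by −χ on Â. Assume further that either (i) χ = 0, φ_l = 0, φ_m = 0, r > 0, s < 0 and gcd(r,s) = 1, or (ii) χ > 0 and there exist positive integers n₁ ∣ n₂ with n₁·n₂ = χ such that ker φ_l ≅ ker φ_m ≅ (ℤ/n₁ℤ)² × (ℤ/n₂ℤ)², and no prime divides all three of r, s, n₁. Then the subgroup G := {(x,y) ∈ A × Â : φ_l(x) = −r·y and φ_m(y) = s·x} is isomorphic to (ℤ/nℤ)⁴. -/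
def torsionSub (m : ℤ) (A : Type*) [AddCommGroup A] : AddSubgroup A where
  carrier := {a | m • a = 0}
  zero_mem' := smul_zero m
  add_mem' := by
    intro a b ha hb
    simp only [Set.mem_setOf_eq, smul_add] at *
    rw [ha, hb, add_zero]
  neg_mem' := by
    intro a ha
    simp only [Set.mem_setOf_eq, smul_neg] at *
    rw [ha, neg_zero]

def solSub {A Ahat : Type*} [AddCommGroup A] [AddCommGroup Ahat]
    (φl : A →+ Ahat) (φm : Ahat →+ A) (r s : ℤ) : AddSubgroup (A × Ahat) where
  carrier := {p | φl p.1 = -(r • p.2) ∧ φm p.2 = s • p.1}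
  zero_mem' := ⟨by simp, by simp⟩
  add_mem' := by
    rintro p q ⟨hp1, hp2⟩ ⟨hq1, hq2⟩
    refine ⟨?_, ?_⟩
    · show φl (p.1 + q.1) = -(r • (p.2 + q.2))
      rw [map_add, hp1, hq1, smul_add, neg_add]
    · show φm (p.2 + q.2) = s • (p.1 + q.1)
      rw [map_add, hp2, hq2, smul_add]
  neg_mem' := by
    rintro p ⟨hp1, hp2⟩
    refine ⟨?_, ?_⟩
    · show φl (-p.1) = -(r • (-p.2))
      rw [map_neg, hp1, smul_neg, neg_neg]
    · show φm (-p.2) = s • (-p.1)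
      rw [map_neg, hp2, smul_neg]

lemma exists_fin_generators_of_finrank_le {K V : Type*} [DivisionRing K] [AddCommGroup V]
    [Module K V] [Module.Finite K V] {d : ℕ} (hd : Module.finrank K V ≤ d) :
    ∃ g : Fin d → V, ∀ x : V, ∃ c : Fin d → K, ∑ i, c i • g i = x := by
  let b := Module.finBasis K V
  let h : Fin d → V := fun i => if hi : (i : ℕ) < Module.finrank K V then b ⟨i, hi⟩ else 0
  have hspan : ⊤ ≤ Submodule.span K (Set.range h) := by
    rw [← b.span_eq]
    refine Submodule.span_mono ?_
    rintro _ ⟨i, rfl⟩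
    exact ⟨⟨i, i.2.trans_le hd⟩, by simp [h]⟩
  exact ⟨h, fun x => (Submodule.mem_span_range_iff_exists_fun K).1 (hspan Submodule.mem_top)⟩

lemma exists_int_generators_of_prime {Q : Type*} [AddCommGroup Q] [Finite Q] {p d : ℕ}
    (hp : p.Prime) (hQ : ∀ x : Q, p • x = 0) (hcard : Nat.card Q ≤ p ^ d) :
    ∃ g : Fin d → Q, ∀ x : Q, ∃ c : Fin d → ℤ, ∑ i, c i • g i = x := by
  have : Fact p.Prime := ⟨hp⟩
  have : Module (ZMod p) Q := AddCommGroup.zmodModule hQ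
  have hrank : Module.finrank (ZMod p) Q ≤ d := by
    rw [← FiniteField.pow_finrank_eq_natCard p Q] at hcard
    exact (Nat.pow_le_pow_iff_right hp.one_lt).1 hcard
  obtain ⟨g, hg⟩ := exists_fin_generators_of_finrank_le hrank
  refine ⟨g, fun x => ?_⟩
  obtain ⟨c, hc⟩ := hg x
  refine ⟨fun i => ((c i).val : ℤ), ?_⟩
  rw [← hc]
  refine Finset.sum_congr rfl fun i _ => ?_
  rw [natCast_zsmul, ← Nat.cast_smul_eq_nsmul (ZMod p), ZMod.natCast_zmod_val]

/-- A family spanning `G` modulo `p` spans `G`, when `G` is killed by a power of `p`. -/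
lemma exists_int_generators_of_prime_pow {G : Type*} [AddCommGroup G] [Finite G] {p k d : ℕ}
    (hp : p.Prime) (hk : ∀ x : G, p ^ k • x = 0)
    (hcard : Nat.card (torsionSub (p : ℤ) G) ≤ p ^ d) :
    ∃ g : Fin d → G, ∀ x : G, ∃ c : Fin d → ℤ, x = ∑ i, c i • g i := by
  let f : G →+ G := nsmulAddMonoidHom p
  have hker : f.ker = torsionSub (p : ℤ) G := by
    ext x
    change p • x = 0 ↔ (p : ℤ) • x = 0
    rw [natCast_zsmul]
  have h_card_quot : Nat.card (G ⧸ f.range) ≤ p ^ d := by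
    have h1 := AddSubgroup.card_eq_card_quotient_mul_card_addSubgroup f.range
    have h2 := AddSubgroup.card_eq_card_quotient_mul_card_addSubgroup f.ker
    rw [Nat.card_congr (QuotientAddGroup.quotientKerEquivRange f).toEquiv, h1, mul_comm] at h2
    rw [Nat.eq_of_mul_eq_mul_left Nat.card_pos h2, hker]
    exact hcard
  obtain ⟨h, hh⟩ := exists_int_generators_of_prime (Q := G ⧸ f.range) hp (fun q => by
    induction q using QuotientAddGroup.induction_on with
    | H x =>
      rw [← QuotientAddGroup.mk_nsmul, QuotientAddGroup.eq_zero_iff]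
      exact ⟨x, rfl⟩) h_card_quot
  choose g hg using fun i => QuotientAddGroup.mk_surjective (h i)
  have hstep : ∀ x : G, ∃ (c : Fin d → ℤ) (y : G), x = ∑ i, c i • g i + p • y := by
    intro x
    obtain ⟨c, hc⟩ := hh x
    have hx : ((∑ i, c i • g i : G) : G ⧸ f.range) = x := by
      rw [← hc, ← QuotientAddGroup.mk'_apply, map_sum]
      refine Finset.sum_congr rfl fun i _ => ?_
      rw [map_zsmul, QuotientAddGroup.mk'_apply, hg]
    obtain ⟨y, hy⟩ := QuotientAddGroup.eq.1 hx
    refine ⟨c, y, ?_⟩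
    change p • y = _ at hy
    rw [hy, add_neg_cancel_left]
  have hpow : ∀ (j : ℕ) (x : G), ∃ (c : Fin d → ℤ) (y : G), x = ∑ i, c i • g i + p ^ j • y := by
    intro j
    induction j with
    | zero => exact fun x => ⟨0, x, by simp⟩
    | succ j ih =>
      intro x
      obtain ⟨c, y, hx⟩ := ih x
      obtain ⟨c', y', hy⟩ := hstep y
      refine ⟨fun i => c i + (p : ℤ) ^ j * c' i, y', ?_⟩
      rw [hx, hy, smul_add, smul_smul, ← pow_succ, Finset.smul_sum, ← add_assoc,
        ← Finset.sum_add_distrib]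
      congr 1
      refine Finset.sum_congr rfl fun i _ => ?_
      rw [add_smul, mul_smul, ← Nat.cast_pow, natCast_zsmul]
  refine ⟨g, fun x => ?_⟩
  obtain ⟨c, y, hx⟩ := hpow k x
  exact ⟨c, by rw [hx, hk, add_zero]⟩

lemma card_torsionSub_addSubgroup_le {G : Type*} [AddCommGroup G] (H : AddSubgroup G) (m : ℤ)
    [Finite (torsionSub m G)] : Nat.card (torsionSub m H) ≤ Nat.card (torsionSub m G) := by
  refine Nat.card_le_card_of_injective
    (fun x => (⟨x.1.1, congrArg Subtype.val x.2⟩ : torsionSub m G)) ?_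
  intro x y hxy
  exact Subtype.ext (Subtype.ext (congrArg (fun z : torsionSub m G => (z : G)) hxy))

lemma exists_int_generators {n d : ℕ} (hn : 0 < n) {G : Type*} [AddCommGroup G] [Finite G]
    (hG : ∀ x : G, n • x = 0)
    (hcard : ∀ p : ℕ, p.Prime → p ∣ n → Nat.card (torsionSub (p : ℤ) G) ≤ p ^ d) :
    ∃ g : Fin d → G, ∀ x : G, ∃ c : Fin d → ℤ, x = ∑ i, c i • g i := by
  induction n using Nat.recOnPosPrimePosCoprime generalizing G with
  | zero => exact absurd hn (lt_irrefl 0)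
  | one => exact ⟨0, fun x => ⟨0, by simpa using hG x⟩⟩
  | prime_pow p k hp hk =>
    exact exists_int_generators_of_prime_pow hp hG (hcard p hp (dvd_pow_self p hk.ne'))
  | coprime a b ha hb hab iha ihb =>
    have hmem (m : ℕ) (x : torsionSub (m : ℤ) G) : (m : ℤ) • (x : G) = 0 := x.2
    obtain ⟨u, hu⟩ := iha (by lia) (G := torsionSub (a : ℤ) G)
      (fun x => Subtype.ext (by simpa using hmem a x))
      (fun p hp hpa => (card_torsionSub_addSubgroup_le _ _).trans
        (hcard p hp (hpa.mul_right b)))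
    obtain ⟨v, hv⟩ := ihb (by lia) (G := torsionSub (b : ℤ) G)
      (fun x => Subtype.ext (by simpa using hmem b x))
      (fun p hp hpb => (card_torsionSub_addSubgroup_le _ _).trans
        (hcard p hp (hpb.mul_left a)))
    obtain ⟨α, β, hαβ⟩ := Nat.isCoprime_iff_coprime.2 hab
    refine ⟨fun i => u i + v i, fun x => ?_⟩
    have hx : ((a * b : ℕ) : ℤ) • x = 0 := by rw [natCast_zsmul]; exact hG x
    obtain ⟨c, hc⟩ := hu ⟨(β * b) • x, by
      change (a : ℤ) • (β * b) • x = 0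
      rw [smul_smul, show (a : ℤ) * (β * b) = β * ((a * b : ℕ) : ℤ) by push_cast; ring,
        mul_smul, hx, smul_zero]⟩
    obtain ⟨e, he⟩ := hv ⟨(α * a) • x, by
      change (b : ℤ) • (α * a) • x = 0
      rw [smul_smul, show (b : ℤ) * (α * a) = α * ((a * b : ℕ) : ℤ) by push_cast; ring,
        mul_smul, hx, smul_zero]⟩
    have hc' : (β * b) • x = ∑ i, c i • (u i : G) := by simpa using congrArg Subtype.val hc
    have he' : (α * a) • x = ∑ i, e i • (v i : G) := by simpa using congrArg Subtype.val he
    refine ⟨fun i => c i * (β * b) + e i * (α * a), ?_⟩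
    calc x = (β * b) • x + (α * a) • x := by rw [← add_smul, add_comm, hαβ, one_smul]
      _ = ∑ i, (c i • (u i : G) + e i • (v i : G)) := by
        rw [hc', he', Finset.sum_add_distrib]
      _ = _ := Finset.sum_congr rfl fun i _ => ?_
    have h1 : c i * (β * b) + e i * (α * a) = c i + (α * (e i - c i)) * a := by
      linear_combination c i * hαβ
    have h2 : c i * (β * b) + e i * (α * a) = e i + (β * (c i - e i)) * b := by
      linear_combination e i * hαβ
    beta_reduce
    rw [smul_add]
    congr 1
    · rw [h1, add_smul, mul_smul _ (a : ℤ), hmem, smul_zero, add_zero]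
    · rw [h2, add_smul, mul_smul _ (b : ℤ), hmem, smul_zero, add_zero]

/-- A finite abelian group killed by `n` whose `p`-torsion has rank at most `d` for all primes
`p ∣ n` is a quotient of `(ℤ/nℤ)ᵈ`. -/
lemma exists_surjective_of_card_torsionSub_le {n d : ℕ} (hn : 0 < n) {G : Type*} [AddCommGroup G]
    [Finite G] (hG : ∀ x : G, n • x = 0)
    (hcard : ∀ p : ℕ, p.Prime → p ∣ n → Nat.card (torsionSub (p : ℤ) G) ≤ p ^ d) :
    ∃ f : (Fin d → ZMod n) →+ G, Function.Surjective f := by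
  obtain ⟨g, hg⟩ := exists_int_generators hn hG hcard
  have : Module (ZMod n) G := AddCommGroup.zmodModule hG
  refine ⟨(Fintype.linearCombination (ZMod n) g).toAddMonoidHom, fun x => ?_⟩
  obtain ⟨c, hc⟩ := hg x
  refine ⟨fun i => (c i : ZMod n), ?_⟩
  rw [hc]
  simp [Fintype.linearCombination_apply, Int.cast_smul_eq_zsmul]

lemma eq_zero_of_zsmul_of_prime_of_not_dvd {G : Type*} [AddCommGroup G] {p : ℕ} (hp : p.Prime)
    {r : ℤ} (hr : ¬ (p : ℤ) ∣ r) {x : G} (hpx : (p : ℤ) • x = 0) (hrx : r • x = 0) : x = 0 := by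
  obtain ⟨a, b, hab⟩ := (Nat.prime_iff_prime_int.1 hp).coprime_iff_not_dvd.2 hr
  rw [← one_smul ℤ x, ← hab, add_smul, mul_smul, mul_smul, hpx, hrx, smul_zero, smul_zero,
    add_zero]

lemma zsmul_eq_zero_of_dvd {G : Type*} [AddCommGroup G] {a b : ℤ} (h : a ∣ b) {x : G}
    (hx : a • x = 0) : b • x = 0 := by
  obtain ⟨c, rfl⟩ := h
  rw [mul_comm, mul_smul, hx, smul_zero]

/-- If `p ∤ a`, the `p`-torsion of a group isomorphic to `(ℤ/aℤ)² × (ℤ/bℤ)²` has rank at most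
two. -/
lemma card_torsionSub_le_sq {K : Type*} [AddCommGroup K] {a b p : ℕ} (hb : 0 < b)
    (hp : p.Prime) (hpa : ¬ p ∣ a)
    (e : K ≃+ ((Fin 2 → ZMod a) × (Fin 2 → ZMod b))) :
    Finite (torsionSub (p : ℤ) K) ∧ Nat.card (torsionSub (p : ℤ) K) ≤ p ^ 2 := by
  have : NeZero b := ⟨hb.ne'⟩
  have hT : Nat.card {z : ZMod b // p • z = 0} ≤ p := by
    classical
    rw [Nat.card_eq_fintype_card, Fintype.card_subtype]
    exact IsAddCyclic.card_nsmul_eq_zero_le hp.pos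
  have hmem (x : torsionSub (p : ℤ) K) : (p : ℤ) • e x = 0 := by
    rw [← map_zsmul, show (p : ℤ) • (x : K) = 0 from x.2, map_zero]
  let f : torsionSub (p : ℤ) K → (Fin 2 → {z : ZMod b // p • z = 0}) := fun x i =>
    ⟨(e x).2 i, by simpa using congrFun (congrArg Prod.snd (hmem x)) i⟩
  have hfst (x : torsionSub (p : ℤ) K) : (e x).1 = 0 := by
    refine eq_zero_of_zsmul_of_prime_of_not_dvd hp (r := a) (by exact_mod_cast hpa)
      (congrArg Prod.fst (hmem x)) ?_
    ext i
    simp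
  have hf : Function.Injective f := by
    intro x y hxy
    refine Subtype.ext (e.injective (Prod.ext (by rw [hfst, hfst]) (funext fun i => ?_)))
    exact congrArg Subtype.val (congrFun hxy i)
  refine ⟨Finite.of_injective f hf, (Nat.card_le_card_of_injective f hf).trans ?_⟩
  rw [Nat.card_fun, Nat.card_fin]
  exact Nat.pow_le_pow_left hT 2

lemma finite_and_card_torsionSub {A : Type*} [AddCommGroup A] {d m : ℕ} (hm : 0 < m)
    (h : Nonempty (torsionSub (m : ℤ) A ≃+ (Fin d → ZMod m))) :
    Finite (torsionSub (m : ℤ) A) ∧ Nat.card (torsionSub (m : ℤ) A) = m ^ d := by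
  obtain ⟨e⟩ := h
  have : NeZero m := ⟨hm.ne'⟩
  refine ⟨Finite.of_equiv _ e.symm.toEquiv, ?_⟩
  rw [Nat.card_congr e.toEquiv, Nat.card_fun, Nat.card_fin, Nat.card_zmod]

section solSub

variable {A Ahat : Type*} [AddCommGroup A] [AddCommGroup Ahat]
  {φl : A →+ Ahat} {φm : Ahat →+ A} {r s : ℤ} {n : ℕ}

lemma zsmul_eq_zero_of_mem_solSub
    (hml : ∀ a : A, φm (φl a) = (-((n : ℤ) + r * s)) • a)
    (hlm : ∀ b : Ahat, φl (φm b) = (-((n : ℤ) + r * s)) • b)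
    {q : A × Ahat} (hq : q ∈ solSub φl φm r s) : (n : ℤ) • q.1 = 0 ∧ (n : ℤ) • q.2 = 0 := by
  obtain ⟨h1, h2⟩ := hq
  constructor
  · have h := hml q.1
    rw [h1, map_neg, map_zsmul, h2, smul_smul, neg_smul, neg_inj, add_smul] at h
    exact (add_eq_right.1 h.symm)
  · have h := hlm q.2
    rw [h2, map_zsmul, h1, smul_neg, smul_smul, neg_smul, neg_inj, mul_comm s r, add_smul] at h
    exact (add_eq_right.1 h.symm)

lemma card_torsionSub_solSub_le_of_not_dvd_left {p : ℕ} (hp : p.Prime) (hr : ¬ (p : ℤ) ∣ r)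
    [Finite (torsionSub (p : ℤ) A)] :
    Nat.card (torsionSub (p : ℤ) (solSub φl φm r s)) ≤ Nat.card (torsionSub (p : ℤ) A) := by
  have hmem (q : torsionSub (p : ℤ) (solSub φl φm r s)) : (p : ℤ) • (q.1 : A × Ahat) = 0 :=
    congrArg Subtype.val q.2
  refine Nat.card_le_card_of_injective
    (fun q => (⟨q.1.1.1, congrArg Prod.fst (hmem q)⟩ : torsionSub (p : ℤ) A)) ?_
  intro q q' h
  have h1 : q.1.1.1 = q'.1.1.1 := congrArg Subtype.val h
  refine Subtype.ext (Subtype.ext (Prod.ext h1 (sub_eq_zero.1 ?_)))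
  refine eq_zero_of_zsmul_of_prime_of_not_dvd hp hr ?_ ?_
  · rw [smul_sub, show (p : ℤ) • q.1.1.2 = 0 from congrArg Prod.snd (hmem q),
      show (p : ℤ) • q'.1.1.2 = 0 from congrArg Prod.snd (hmem q'), sub_zero]
  · rw [smul_sub, sub_eq_zero, ← neg_inj, ← q.1.2.1, ← q'.1.2.1, h1]

lemma card_torsionSub_solSub_le_of_not_dvd_right {p : ℕ} (hp : p.Prime) (hs : ¬ (p : ℤ) ∣ s)
    [Finite (torsionSub (p : ℤ) Ahat)] :
    Nat.card (torsionSub (p : ℤ) (solSub φl φm r s)) ≤ Nat.card (torsionSub (p : ℤ) Ahat) := by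
  have hmem (q : torsionSub (p : ℤ) (solSub φl φm r s)) : (p : ℤ) • (q.1 : A × Ahat) = 0 :=
    congrArg Subtype.val q.2
  refine Nat.card_le_card_of_injective
    (fun q => (⟨q.1.1.2, congrArg Prod.snd (hmem q)⟩ : torsionSub (p : ℤ) Ahat)) ?_
  intro q q' h
  have h2 : q.1.1.2 = q'.1.1.2 := congrArg Subtype.val h
  refine Subtype.ext (Subtype.ext (Prod.ext (sub_eq_zero.1 ?_) h2))
  refine eq_zero_of_zsmul_of_prime_of_not_dvd hp hs ?_ ?_
  · rw [smul_sub, show (p : ℤ) • q.1.1.1 = 0 from congrArg Prod.fst (hmem q),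
      show (p : ℤ) • q'.1.1.1 = 0 from congrArg Prod.fst (hmem q'), sub_zero]
  · rw [smul_sub, sub_eq_zero, ← q.1.2.2, ← q'.1.2.2, h2]

lemma card_torsionSub_solSub_le_of_dvd {p : ℕ} (hr : (p : ℤ) ∣ r) (hs : (p : ℤ) ∣ s)
    [Finite (torsionSub (p : ℤ) φl.ker)] [Finite (torsionSub (p : ℤ) φm.ker)] :
    Nat.card (torsionSub (p : ℤ) (solSub φl φm r s)) ≤
      Nat.card (torsionSub (p : ℤ) φl.ker) * Nat.card (torsionSub (p : ℤ) φm.ker) := by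
  have hmem (q : torsionSub (p : ℤ) (solSub φl φm r s)) : (p : ℤ) • (q.1 : A × Ahat) = 0 :=
    congrArg Subtype.val q.2
  have h1 (q : torsionSub (p : ℤ) (solSub φl φm r s)) : (p : ℤ) • q.1.1.1 = 0 :=
    congrArg Prod.fst (hmem q)
  have h2 (q : torsionSub (p : ℤ) (solSub φl φm r s)) : (p : ℤ) • q.1.1.2 = 0 :=
    congrArg Prod.snd (hmem q)
  have hl (q : torsionSub (p : ℤ) (solSub φl φm r s)) : φl q.1.1.1 = 0 := by
    rw [q.1.2.1, zsmul_eq_zero_of_dvd hr (h2 q), neg_zero]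
  have hm (q : torsionSub (p : ℤ) (solSub φl φm r s)) : φm q.1.1.2 = 0 := by
    rw [q.1.2.2]
    exact zsmul_eq_zero_of_dvd hs (h1 q)
  rw [← Nat.card_prod]
  refine Nat.card_le_card_of_injective
    (fun q => ((⟨⟨q.1.1.1, hl q⟩, Subtype.ext (h1 q)⟩, ⟨⟨q.1.1.2, hm q⟩, Subtype.ext (h2 q)⟩) :
      torsionSub (p : ℤ) φl.ker × torsionSub (p : ℤ) φm.ker)) ?_
  intro q q' h
  refine Subtype.ext (Subtype.ext (Prod.ext ?_ ?_))
  · exact congrArg (fun z => (z.1.1 : A)) h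
  · exact congrArg (fun z => (z.2.1 : Ahat)) h

lemma finite_solSub (hml : ∀ a : A, φm (φl a) = (-((n : ℤ) + r * s)) • a)
    (hlm : ∀ b : Ahat, φl (φm b) = (-((n : ℤ) + r * s)) • b)
    [Finite (torsionSub (n : ℤ) A)] [Finite (torsionSub (n : ℤ) Ahat)] :
    Finite (solSub φl φm r s) := by
  refine Finite.of_injective (fun q => ((⟨q.1.1, (zsmul_eq_zero_of_mem_solSub hml hlm q.2).1⟩,
    ⟨q.1.2, (zsmul_eq_zero_of_mem_solSub hml hlm q.2).2⟩) :
      torsionSub (n : ℤ) A × torsionSub (n : ℤ) Ahat)) ?_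
  intro q q' h
  refine Subtype.ext (Prod.ext ?_ ?_)
  · exact congrArg (fun z => (z.1 : A)) h
  · exact congrArg (fun z => (z.2 : Ahat)) h

/-- The homomorphism `(v, u) ↦ (φm u - r v, φl v + s u)` maps the `n`-torsion of `A × Ahat` onto
`solSub φl φm r s`, with kernel `solSub φl φm s r`. -/
lemma card_solSub_mul_card_solSub (hn : 0 < n)
    (hdivA : ∀ m : ℕ, 0 < m → ∀ a : A, ∃ b : A, m • b = a)
    (hdivAhat : ∀ m : ℕ, 0 < m → ∀ a : Ahat, ∃ b : Ahat, m • b = a)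
    (hml : ∀ a : A, φm (φl a) = (-((n : ℤ) + r * s)) • a)
    (hlm : ∀ b : Ahat, φl (φm b) = (-((n : ℤ) + r * s)) • b) :
    Nat.card (solSub φl φm r s) * Nat.card (solSub φl φm s r) =
      Nat.card (torsionSub (n : ℤ) A) * Nat.card (torsionSub (n : ℤ) Ahat) := by
  let N : A × Ahat →+ A × Ahat :=
    { toFun := fun q => (φm q.2 - r • q.1, φl q.1 + s • q.2)
      map_zero' := by simp
      map_add' := fun q q' => by
        ext <;> simp only [Prod.fst_add, Prod.snd_add, map_add, smul_add] <;> abel }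
  have hNker : N.ker = solSub φl φm s r := by
    ext q
    change N q = 0 ↔ φl q.1 = -(s • q.2) ∧ φm q.2 = r • q.1
    change (φm q.2 - r • q.1, φl q.1 + s • q.2) = (0, 0) ↔ _
    rw [Prod.mk.injEq, sub_eq_zero, add_eq_zero_iff_eq_neg, and_comm]
  have hl (q : A × Ahat) : φl (N q).1 + r • (N q).2 = -((n : ℤ) • q.2) := by
    change φl (φm q.2 - r • q.1) + r • (φl q.1 + s • q.2) = _
    rw [map_sub, map_zsmul, hlm]
    module
  have hm (q : A × Ahat) : φm (N q).2 - s • (N q).1 = -((n : ℤ) • q.1) := by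
    change φm (φl q.1 + s • q.2) - s • (φm q.2 - r • q.1) = _
    rw [map_add, map_zsmul, hml]
    module
  have hNmem (q : A × Ahat) :
      N q ∈ solSub φl φm r s ↔ (n : ℤ) • q.1 = 0 ∧ (n : ℤ) • q.2 = 0 := by
    change φl (N q).1 = -(r • (N q).2) ∧ φm (N q).2 = s • (N q).1 ↔ _
    rw [← add_eq_zero_iff_eq_neg, ← sub_eq_zero (a := φm _), hl, hm, neg_eq_zero, neg_eq_zero,
      and_comm]
  have hNsurj : Function.Surjective N := by
    intro q
    obtain ⟨x, hx⟩ := hdivA n hn q.1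
    obtain ⟨y, hy⟩ := hdivAhat n hn q.2
    rw [← natCast_zsmul] at hx hy
    refine ⟨-(φm y - s • x, φl x + r • y), ?_⟩
    rw [map_neg, neg_eq_iff_eq_neg]
    change (φm (φl x + r • y) - r • (φm y - s • x), φl (φm y - s • x) + s • (φl x + r • y)) = _
    rw [map_add, map_sub, hml, hlm, map_zsmul, map_zsmul]
    refine Prod.ext ?_ ?_
    · change _ = -q.1
      rw [← hx]
      module
    · change _ = -q.2
      rw [← hy]
      module
  let P := (solSub φl φm r s).comap N
  have hP : Nat.card P = Nat.card (torsionSub (n : ℤ) A) * Nat.card (torsionSub (n : ℤ) Ahat) := by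
    rw [show P = (torsionSub (n : ℤ) A).prod (torsionSub (n : ℤ) Ahat) from
      AddSubgroup.ext hNmem, ← Nat.card_prod]
    exact Nat.card_congr (AddSubgroup.prodEquiv _ _).toEquiv
  let f : P →+ solSub φl φm r s := N.addSubgroupComap (solSub φl φm r s)
  have hf : Function.Surjective f := by
    rintro ⟨q, hq⟩
    obtain ⟨t, rfl⟩ := hNsurj q
    exact ⟨⟨t, hq⟩, rfl⟩
  have hfker : Nat.card f.ker = Nat.card (solSub φl φm s r) := by
    rw [← hNker]
    refine Nat.card_congr
      { toFun := fun t => ⟨t.1.1, congrArg Subtype.val t.2⟩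
        invFun := fun t => ⟨⟨t.1, ?_⟩, Subtype.ext t.2⟩
        left_inv := fun _ => rfl
        right_inv := fun _ => rfl }
    change N t.1 ∈ solSub φl φm r s
    rw [show N t.1 = 0 from t.2]
    exact zero_mem _
  rw [← hP, AddSubgroup.card_eq_card_quotient_mul_card_addSubgroup f.ker, hfker,
    Nat.card_congr (QuotientAddGroup.quotientKerEquivOfSurjective f hf).toEquiv]

/-- A bound on the `p`-torsion of `solSub φl φm r s` makes it a quotient of `(ℤ/nℤ)ᵈ`. -/
lemma exists_surjective_solSub {d : ℕ} (hn : 0 < n)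
    (hml : ∀ a : A, φm (φl a) = (-((n : ℤ) + r * s)) • a)
    (hlm : ∀ b : Ahat, φl (φm b) = (-((n : ℤ) + r * s)) • b)
    [Finite (torsionSub (n : ℤ) A)] [Finite (torsionSub (n : ℤ) Ahat)]
    (hcard : ∀ p : ℕ, p.Prime → p ∣ n →
      Nat.card (torsionSub (p : ℤ) (solSub φl φm r s)) ≤ p ^ d) :
    ∃ f : (Fin d → ZMod n) →+ solSub φl φm r s, Function.Surjective f := by
  have := finite_solSub hml hlm
  refine exists_surjective_of_card_torsionSub_le hn (fun q => Subtype.ext ?_) hcard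
  have h := zsmul_eq_zero_of_mem_solSub hml hlm q.2
  rw [natCast_zsmul, natCast_zsmul] at h
  exact Prod.ext h.1 h.2

end solSub

/-- Theorem 3.1 / Claim 3.5: the solution group `G_A(v)` is isomorphic to `(ℤ/nℤ)⁴`. -/
theorem groupsOfSymplecticInvolutions_GAv_iso
    (A Ahat : Type*) [AddCommGroup A] [AddCommGroup Ahat]
    (hdivA : ∀ m : ℕ, 0 < m → ∀ a : A, ∃ b : A, m • b = a)
    (hdivAhat : ∀ m : ℕ, 0 < m → ∀ a : Ahat, ∃ b : Ahat, m • b = a)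
    (htorA : ∀ m : ℕ, 0 < m → Nonempty (torsionSub (m : ℤ) A ≃+ (Fin 4 → ZMod m)))
    (htorAhat : ∀ m : ℕ, 0 < m → Nonempty (torsionSub (m : ℤ) Ahat ≃+ (Fin 4 → ZMod m)))
    (φl : A →+ Ahat) (φm : Ahat →+ A)
    (r s : ℤ) (n : ℕ) (hn : 1 ≤ n)
    (hml : ∀ a : A, φm (φl a) = (-((n : ℤ) + r * s)) • a)
    (hlm : ∀ b : Ahat, φl (φm b) = (-((n : ℤ) + r * s)) • b)
    (hcase :
      ((n : ℤ) + r * s = 0 ∧ φl = 0 ∧ φm = 0 ∧ 0 < r ∧ s < 0 ∧ Int.gcd r s = 1) ∨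
      (0 < (n : ℤ) + r * s ∧
        ∃ n₁ n₂ : ℕ, 0 < n₁ ∧ 0 < n₂ ∧ n₁ ∣ n₂ ∧ ((n₁ : ℤ) * n₂ = (n : ℤ) + r * s) ∧
          Nonempty (φl.ker ≃+ ((Fin 2 → ZMod n₁) × (Fin 2 → ZMod n₂))) ∧
          Nonempty (φm.ker ≃+ ((Fin 2 → ZMod n₁) × (Fin 2 → ZMod n₂))) ∧
          (∀ p : ℕ, p.Prime → ¬((p : ℤ) ∣ r ∧ (p : ℤ) ∣ s ∧ p ∣ n₁)))) :
    Nonempty (solSub φl φm r s ≃+ (Fin 4 → ZMod n)) := by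
  have : NeZero n := ⟨by lia⟩
  obtain ⟨_, hcardA⟩ := finite_and_card_torsionSub hn (htorA n hn)
  obtain ⟨_, hcardAhat⟩ := finite_and_card_torsionSub hn (htorAhat n hn)
  have hdvd (p : ℕ) (hp : p.Prime) (hr : (p : ℤ) ∣ r) (hs : (p : ℤ) ∣ s) :
      (Finite (torsionSub (p : ℤ) φl.ker) ∧ Nat.card (torsionSub (p : ℤ) φl.ker) ≤ p ^ 2) ∧
      (Finite (torsionSub (p : ℤ) φm.ker) ∧ Nat.card (torsionSub (p : ℤ) φm.ker) ≤ p ^ 2) := by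
    obtain ⟨-, -, -, -, -, hgcd⟩ | ⟨-, n₁, n₂, -, hn₂, -, -, ⟨el⟩, ⟨em⟩, hprim⟩ := hcase
    · have h := Int.dvd_coe_gcd hr hs
      rw [hgcd] at h
      exact absurd (by exact_mod_cast h) hp.not_dvd_one
    · have hpn₁ : ¬ p ∣ n₁ := fun h => hprim p hp ⟨hr, hs, h⟩
      exact ⟨card_torsionSub_le_sq hn₂ hp hpn₁ el, card_torsionSub_le_sq hn₂ hp hpn₁ em⟩
  have hcard (r' s' : ℤ) (h : ∀ p : ℕ, (p : ℤ) ∣ r' → (p : ℤ) ∣ s' → (p : ℤ) ∣ r ∧ (p : ℤ) ∣ s)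
      (p : ℕ) (hp : p.Prime) :
      Nat.card (torsionSub (p : ℤ) (solSub φl φm r' s')) ≤ p ^ 4 := by
    obtain ⟨_, hpA⟩ := finite_and_card_torsionSub hp.pos (htorA p hp.pos)
    obtain ⟨_, hpAhat⟩ := finite_and_card_torsionSub hp.pos (htorAhat p hp.pos)
    by_cases hr : (p : ℤ) ∣ r'
    · by_cases hs : (p : ℤ) ∣ s'
      · obtain ⟨⟨_, hl⟩, ⟨_, hm⟩⟩ := hdvd p hp (h p hr hs).1 (h p hr hs).2
        exact (card_torsionSub_solSub_le_of_dvd hr hs).trans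
          ((Nat.mul_le_mul hl hm).trans_eq (by ring))
      · exact (card_torsionSub_solSub_le_of_not_dvd_right hp hs).trans_eq hpAhat
    · exact (card_torsionSub_solSub_le_of_not_dvd_left hp hr).trans_eq hpA
  obtain ⟨f, hf⟩ := exists_surjective_solSub hn hml hlm
    (fun p hp _ => hcard r s (fun _ h h' => ⟨h, h'⟩) p hp)
  obtain ⟨f', hf'⟩ := exists_surjective_solSub (r := s) (s := r) hn
    (by simpa only [mul_comm s r] using hml) (by simpa only [mul_comm s r] using hlm)
    (fun p hp _ => hcard s r (fun _ h h' => ⟨h', h⟩) p hp)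
  have hle' := Nat.card_le_card_of_surjective f' hf'
  have hmul := card_solSub_mul_card_solSub hn hdivA hdivAhat hml hlm
  have hdom : Nat.card (Fin 4 → ZMod n) = n ^ 4 := by
    rw [Nat.card_fun, Nat.card_fin, Nat.card_zmod]
  rw [hcardA, hcardAhat] at hmul
  rw [hdom] at hle'
  have hge : Nat.card (Fin 4 → ZMod n) ≤ Nat.card (solSub φl φm r s) := by
    rw [hdom]
    exact Nat.le_of_mul_le_mul_right (hmul.ge.trans (Nat.mul_le_mul_left _ hle')) (by positivity)
  have hbij : Function.Bijective f := hf.bijective_of_nat_card_le hge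
  exact ⟨(AddEquiv.ofBijective f hbij).symm⟩
end

section
/- Let A and Â be abelian groups, φ_l : A → Â and φ_m : Â → A group homomorphisms, and r, s, n integers with χ := n + r·s, such that φ_m ∘ φ_l equals multiplication by −χ on A and φ_l ∘ φ_m equals multiplication by −χ on Â. Let p be a prime and q ≥ 1 with p^q ∣ n and p ∤ r. Then the first projection (x,y) ↦ x restricts to a group isomorphism from G ∩ (A[p^q] × Â[p^q]) onto A[p^q], where G := {(x,y) ∈ A × Â : φ_l(x) = −r·y and φ_m(y) = s·x}. -/
theorem mem_solSub {A Ahat : Type*} [AddCommGroup A] [AddCommGroup Ahat]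
    {φl : A →+ Ahat} {φm : Ahat →+ A} {r s : ℤ} {z : A × Ahat} :
    z ∈ solSub φl φm r s ↔ φl z.1 = -(r • z.2) ∧ φm z.2 = s • z.1 :=
  Iff.rfl

theorem eq_zero_of_isCoprime_smul {B : Type*} [AddCommGroup B] {r m : ℤ} (h : IsCoprime r m)
    {b : B} (hr : r • b = 0) (hm : m • b = 0) : b = 0 := by
  obtain ⟨u, w, huw⟩ := h
  rw [← one_smul ℤ b, ← huw, add_smul, mul_smul, mul_smul, hr, hm, smul_zero, smul_zero, add_zero]

/-- Every `m`-torsion point `x` is the first component of an `m`-torsion solution, namely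
`(x, -u • φl x)` where `u` inverts `r` modulo `m`. -/
theorem exists_mem_solSub_of_isCoprime {A Ahat : Type*} [AddCommGroup A] [AddCommGroup Ahat]
    {φl : A →+ Ahat} {φm : Ahat →+ A} {r s n m : ℤ}
    (hml : ∀ a : A, φm (φl a) = (-(n + r * s)) • a)
    (hn : m ∣ n) (hr : IsCoprime r m) {x : A} (hx : m • x = 0) :
    ∃ y : Ahat, (x, y) ∈ solSub φl φm r s ∧ m • y = 0 := by
  obtain ⟨u, w, huw⟩ := hr
  obtain ⟨k, rfl⟩ := hn
  have hlx : m • φl x = 0 := by rw [← map_zsmul, hx, map_zero]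
  refine ⟨-u • φl x, mem_solSub.2 ⟨?_, ?_⟩, ?_⟩
  · have key : -(r • (-u • φl x)) = φl x - w • (m • φl x) := by
      rw [← neg_smul, smul_smul, smul_smul, show -r * -u = 1 - w * m by linear_combination huw,
        sub_smul, one_smul]
    rw [key, hlx, smul_zero, sub_zero]
  · have key : φm (-u • φl x) = s • x + (u * k - s * w) • (m • x) := by
      rw [map_zsmul, hml, smul_smul, smul_smul, ← add_smul]
      congr 1
      linear_combination s * huw
    rw [key, hx, smul_zero, add_zero]
  · rw [smul_comm, hlx, smul_zero]

/-- Case 2 of Claim 3.5: if `p^q ∣ n` and `p ∤ r`, the first projection restricts to a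
group isomorphism `G ∩ (A[p^q] × Â[p^q]) ≅ A[p^q]`. -/
theorem proj_iso_on_pq_torsion_of_coprime
    (A Ahat : Type*) [AddCommGroup A] [AddCommGroup Ahat]
    (φl : A →+ Ahat) (φm : Ahat →+ A) (r s n : ℤ)
    (hml : ∀ a : A, φm (φl a) = (-(n + r * s)) • a)
    (hlm : ∀ b : Ahat, φl (φm b) = (-(n + r * s)) • b)
    (p : ℕ) (hp : p.Prime) (q : ℕ) (hq : 1 ≤ q)
    (hdvd : ((p : ℤ) ^ q) ∣ n) (hpr : ¬ ((p : ℤ) ∣ r)) :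
    ∃ e : ↥(solSub φl φm r s ⊓
        (torsionSub ((p : ℤ) ^ q) A).prod (torsionSub ((p : ℤ) ^ q) Ahat)) ≃+
        ↥(torsionSub ((p : ℤ) ^ q) A),
      ∀ g, (e g : A) = (g : A × Ahat).1 := by
  have hr : IsCoprime r ((p : ℤ) ^ q) :=
    (((Nat.prime_iff_prime_int.mp hp).coprime_iff_not_dvd.mpr hpr).pow_left).symm
  let f : ↥(solSub φl φm r s ⊓
        (torsionSub ((p : ℤ) ^ q) A).prod (torsionSub ((p : ℤ) ^ q) Ahat)) →+
        ↥(torsionSub ((p : ℤ) ^ q) A) :=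
    ((AddMonoidHom.fst A Ahat).comp (AddSubgroup.subtype _)).codRestrict _ fun g => g.2.2.1
  have hf : Function.Bijective f := by
    constructor
    · refine (injective_iff_map_eq_zero f).2 ?_
      rintro ⟨⟨x, y⟩, ⟨⟨hl, _⟩, _, hy⟩⟩ h
      obtain rfl : x = 0 := congrArg Subtype.val h
      have hry : r • y = 0 := by simpa using hl
      obtain rfl : y = 0 := eq_zero_of_isCoprime_smul hr hry hy
      rfl
    · rintro ⟨x, hx⟩
      obtain ⟨y, hxy, hy⟩ := exists_mem_solSub_of_isCoprime hml hdvd hr hx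
      exact ⟨⟨(x, y), hxy, hx, hy⟩, rfl⟩
  exact ⟨AddEquiv.ofBijective f hf, fun _ => rfl⟩
end

section
/- Let T be a divisible abelian group such that T[m] ≅ (ℤ/mℤ)⁸ for every positive integer m. Let n, d ≥ 1 and let G₀ ≤ T be a subgroup with G₀ ≅ (ℤ/nℤ)⁴. Then the subgroup {t ∈ T : d·t ∈ G₀} is isomorphic to (ℤ/dnℤ)⁴ × (ℤ/dℤ)⁴. -/
/-- Multiplication by `d` as a group homomorphism. -/
def smulHom (d : ℤ) (T : Type*) [AddCommGroup T] : T →+ T :=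
  AddMonoidHom.mk' (fun t => d • t) (fun a b => smul_add d a b)

section TorsionCounting

theorem card_nsmul_ker_congr {A B : Type*} [AddCommGroup A] [AddCommGroup B] (e : A ≃+ B) (m : ℕ) :
    Nat.card (nsmulAddMonoidHom m : A →+ A).ker = Nat.card (nsmulAddMonoidHom m : B →+ B).ker := by
  refine Nat.card_congr (e.toEquiv.subtypeEquiv fun a => ?_)
  simp [AddMonoidHom.mem_ker, ← map_nsmul]

theorem card_nsmul_ker_pi {ι : Type*} [Fintype ι] (A : ι → Type*) [∀ i, AddCommGroup (A i)]
    (m : ℕ) : Nat.card (nsmulAddMonoidHom m : (∀ i, A i) →+ ∀ i, A i).ker =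
      ∏ i, Nat.card (nsmulAddMonoidHom m : A i →+ A i).ker := by
  rw [← Nat.card_pi]
  refine Nat.card_congr
    { toFun x i := ⟨x.1 i, congrFun x.2 i⟩
      invFun x := ⟨fun i => (x i).1, funext fun i => (x i).2⟩
      left_inv _ := rfl
      right_inv _ := rfl }

theorem card_nsmul_ker_prod (A B : Type*) [AddCommGroup A] [AddCommGroup B] (m : ℕ) :
    Nat.card (nsmulAddMonoidHom m : A × B →+ A × B).ker =
      Nat.card (nsmulAddMonoidHom m : A →+ A).ker *
        Nat.card (nsmulAddMonoidHom m : B →+ B).ker := by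
  rw [← Nat.card_prod]
  refine Nat.card_congr
    { toFun x := (⟨x.1.1, congrArg Prod.fst x.2⟩, ⟨x.1.2, congrArg Prod.snd x.2⟩)
      invFun x := ⟨(x.1.1, x.2.1), Prod.ext x.1.2 x.2.2⟩
      left_inv _ := rfl
      right_inv _ := rfl }

theorem card_nsmul_ker_zmod (n m : ℕ) [NeZero n] :
    Nat.card (nsmulAddMonoidHom m : ZMod n →+ ZMod n).ker = n.gcd m := by
  rw [IsAddCyclic.card_nsmulAddMonoidHom_ker, Nat.card_zmod]

theorem card_nsmul_ker_pi_zmod {ι : Type*} [Fintype ι] (n : ι → ℕ) (hn : ∀ i, n i ≠ 0) (m : ℕ) :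
    Nat.card (nsmulAddMonoidHom m : (∀ i, ZMod (n i)) →+ ∀ i, ZMod (n i)).ker =
      ∏ i, (n i).gcd m := by
  rw [card_nsmul_ker_pi]
  refine Finset.prod_congr rfl fun i _ => ?_
  have : NeZero (n i) := ⟨hn i⟩
  exact card_nsmul_ker_zmod _ _

theorem card_nsmul_ker_pi_zmod_const (k n m : ℕ) (hn : n ≠ 0) :
    Nat.card (nsmulAddMonoidHom m : (Fin k → ZMod n) →+ (Fin k → ZMod n)).ker = n.gcd m ^ k := by
  rw [card_nsmul_ker_pi_zmod (fun _ : Fin k => n) (fun _ => hn)]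
  simp

/-- A finite abelian group is a product of cyclic groups of nontrivial prime power order. -/
theorem exists_addEquiv_pi_zmod_isPrimePow (A : Type*) [AddCommGroup A] [Finite A] :
    ∃ (ι : Type) (_ : Fintype ι) (n : ι → ℕ),
      (∀ i, IsPrimePow (n i)) ∧ Nonempty (A ≃+ ∀ i, ZMod (n i)) := by
  classical
  obtain ⟨ι, _, p, hp, e, ⟨f⟩⟩ := AddCommGroup.equiv_directSum_zmod_of_finite A
  let r : (∀ i, ZMod (p i ^ e i)) →+ ∀ i : {i // e i ≠ 0}, ZMod (p i ^ e i) :=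
    { toFun x i := x i
      map_zero' := rfl
      map_add' _ _ := rfl }
  have hr : Function.Bijective r := by
    constructor
    · intro x y h
      funext i
      by_cases hi : e i = 0
      · have : Subsingleton (ZMod (p i ^ e i)) := ZMod.subsingleton_iff.2 (by simp [hi])
        exact Subsingleton.elim _ _
      · exact congrFun h ⟨i, hi⟩
    · intro y
      refine ⟨fun i => if hi : e i ≠ 0 then y ⟨i, hi⟩ else 0, ?_⟩
      funext i
      exact dif_pos i.2
  exact ⟨{i // e i ≠ 0}, inferInstance, fun i => p i ^ e i,
    fun i => (hp i).isPrimePow.pow i.2,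
    ⟨(f.trans (DirectSum.addEquivProd _)).trans (AddEquiv.ofBijective r hr)⟩⟩

theorem gcd_prime_pow_sq {n p k : ℕ} (hp : p.Prime) (hn : IsPrimePow n) :
    n.gcd (p ^ (k + 1)) ^ 2 =
      n.gcd (p ^ k) * n.gcd (p ^ (k + 2)) * p ^ (if n = p ^ (k + 1) then 1 else 0) := by
  obtain ⟨q, e, hq, he, rfl⟩ := hn
  have hq := hq.nat_prime
  by_cases hqp : q = p
  · subst hqp
    have gcd_pow (a b : ℕ) : (q ^ a).gcd (q ^ b) = q ^ min a b := by
      rcases le_total a b with h | h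
      · rw [min_eq_left h, Nat.gcd_eq_left (pow_dvd_pow q h)]
      · rw [min_eq_right h, Nat.gcd_eq_right (pow_dvd_pow q h)]
    simp only [gcd_pow, Nat.pow_right_inj hq.two_le, ← pow_mul, ← pow_add]
    split_ifs <;> omega
  · have hcop (j : ℕ) : (q ^ e).gcd (p ^ j) = 1 :=
      Nat.Coprime.pow _ _ ((Nat.coprime_primes hq hp).2 hqp)
    have hne : q ^ e ≠ p ^ (k + 1) := fun h => by
      have := hcop (k + 1)
      rw [h, Nat.gcd_self] at this
      exact (Nat.one_lt_pow k.succ_ne_zero hp.one_lt).ne' this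
    simp [hcop, hne]

theorem prod_gcd_prime_pow_sq {ι : Type*} [Fintype ι] {n : ι → ℕ} (hn : ∀ i, IsPrimePow (n i))
    {p k : ℕ} (hp : p.Prime) :
    (∏ i, (n i).gcd (p ^ (k + 1))) ^ 2 =
      (∏ i, (n i).gcd (p ^ k)) * (∏ i, (n i).gcd (p ^ (k + 2))) *
        p ^ Fintype.card {i // n i = p ^ (k + 1)} := by
  rw [← Finset.prod_pow, Finset.prod_congr rfl fun i _ => gcd_prime_pow_sq hp (hn i),
    Finset.prod_mul_distrib, Finset.prod_mul_distrib, Finset.prod_pow_eq_pow_sum,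
    Fintype.card_subtype, Finset.card_filter]

theorem card_fiber_eq_of_prod_gcd_eq {ι κ : Type*} [Fintype ι] [Fintype κ] {a : ι → ℕ} {b : κ → ℕ}
    (ha : ∀ i, IsPrimePow (a i)) (hb : ∀ j, IsPrimePow (b j))
    (h : ∀ m, 0 < m → ∏ i, (a i).gcd m = ∏ j, (b j).gcd m) (q : ℕ) :
    Fintype.card {i // a i = q} = Fintype.card {j // b j = q} := by
  by_cases hq : IsPrimePow q
  · obtain ⟨p, k, hp, hk, rfl⟩ := hq
    have hp := hp.nat_prime
    obtain ⟨k, rfl⟩ := Nat.exists_eq_add_one.2 hk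
    have hA := prod_gcd_prime_pow_sq ha (k := k) hp
    rw [h _ (pow_pos hp.pos _), h _ (pow_pos hp.pos _), h _ (pow_pos hp.pos _),
      prod_gcd_prime_pow_sq hb hp] at hA
    have hpos (m : ℕ) : 0 < ∏ j, (b j).gcd m :=
      Finset.prod_pos fun j _ => Nat.gcd_pos_of_pos_left _ (hb j).pos
    exact (Nat.pow_right_injective hp.two_le
      (Nat.eq_of_mul_eq_mul_left (Nat.mul_pos (hpos _) (hpos _)) hA)).symm
  · have : IsEmpty {i // a i = q} := ⟨fun i => hq (i.2 ▸ ha i)⟩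
    have : IsEmpty {j // b j = q} := ⟨fun j => hq (j.2 ▸ hb j)⟩
    simp

/-- Finite abelian groups with the same number of `m`-torsion elements for all `m` are
isomorphic. -/
theorem nonempty_addEquiv_of_card_nsmul_ker_eq {A B : Type*} [AddCommGroup A] [AddCommGroup B]
    [Finite A] [Finite B]
    (h : ∀ m : ℕ, 0 < m → Nat.card (nsmulAddMonoidHom m : A →+ A).ker =
      Nat.card (nsmulAddMonoidHom m : B →+ B).ker) : Nonempty (A ≃+ B) := by
  obtain ⟨ι, _, a, ha, ⟨f⟩⟩ := exists_addEquiv_pi_zmod_isPrimePow A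
  obtain ⟨κ, _, b, hb, ⟨g⟩⟩ := exists_addEquiv_pi_zmod_isPrimePow B
  have hcard := card_fiber_eq_of_prod_gcd_eq ha hb fun m hm => by
    rw [← card_nsmul_ker_pi_zmod a (fun i => (ha i).ne_zero),
      ← card_nsmul_ker_pi_zmod b (fun j => (hb j).ne_zero),
      ← card_nsmul_ker_congr f, ← card_nsmul_ker_congr g, h m hm]
  let σ : ι ≃ κ := Equiv.ofFiberEquiv fun q => Fintype.equivOfCardEq (hcard q)
  have hσ (i : ι) : a i = b (σ i) := (Equiv.ofFiberEquiv_map _ i).symm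
  let s : (∀ i, ZMod (a i)) ≃+ ∀ i, ZMod (b (σ i)) :=
    AddEquiv.piCongrRight fun i => (ZMod.ringEquivCongr (hσ i)).toAddEquiv
  exact ⟨f.trans (s.trans
    ((RingEquiv.piCongrLeft (fun j => ZMod (b j)) σ).toAddEquiv.trans g.symm))⟩

theorem AddSubgroup.card_eq_card_map_mul_card_inf_ker {G H : Type*} [AddCommGroup G]
    [AddCommGroup H] (f : G →+ H) (S : AddSubgroup G) :
    Nat.card S = Nat.card (S.map f) * Nat.card (f.ker ⊓ S : AddSubgroup G) := by
  rw [← AddSubgroup.relIndex_ker, ← AddSubgroup.inf_relIndex_right f.ker S,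
    ← AddSubgroup.relIndex_bot_left S, ← AddSubgroup.relIndex_bot_left (f.ker ⊓ S), mul_comm,
    AddSubgroup.relIndex_mul_relIndex _ _ _ bot_le inf_le_right]

/-- The number of `m`-torsion elements in a subgroup, as a subgroup of the ambient group. -/
theorem AddSubgroup.card_nsmul_ker_inf {G : Type*} [AddCommGroup G] (S : AddSubgroup G) (m : ℕ) :
    Nat.card ((nsmulAddMonoidHom m : G →+ G).ker ⊓ S : AddSubgroup G) =
      Nat.card (nsmulAddMonoidHom m : S →+ S).ker := by
  refine Nat.card_congr
    { toFun x := ⟨⟨x.1, x.2.2⟩, Subtype.ext x.2.1⟩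
      invFun x := ⟨x.1.1, congrArg Subtype.val x.2, x.1.2⟩
      left_inv _ := rfl
      right_inv _ := rfl }

/-- In a divisible group, the `m`-torsion of the preimage of `S` under multiplication by `d` maps
onto the `m / gcd(d, m)`-torsion of `S`. -/
theorem map_nsmul_ker_inf_comap {T : Type*} [AddCommGroup T]
    (hdiv : ∀ m : ℕ, 0 < m → ∀ t : T, ∃ u : T, m • u = t) (S : AddSubgroup T) {d m : ℕ}
    (hd : 0 < d) :
    ((nsmulAddMonoidHom m : T →+ T).ker ⊓ S.comap (nsmulAddMonoidHom d)).map
        (nsmulAddMonoidHom d) =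
      (nsmulAddMonoidHom (m / d.gcd m) : T →+ T).ker ⊓ S := by
  have he : 0 < d.gcd m := Nat.gcd_pos_of_pos_left _ hd
  obtain ⟨d', hd'⟩ := Nat.gcd_dvd_left d m
  obtain ⟨m', hm'⟩ := Nat.gcd_dvd_right d m
  have hdm : m / d.gcd m = m' := Nat.div_eq_of_eq_mul_right he hm'
  have hcomm : m' * d = d' * m := by
    linear_combination m' * hd' - d' * hm'
  rw [hdm]
  ext g
  simp only [AddSubgroup.mem_map, AddSubgroup.mem_inf, AddMonoidHom.mem_ker,
    AddSubgroup.mem_comap, nsmulAddMonoidHom_apply]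
  constructor
  · rintro ⟨t, ⟨ht, htS⟩, rfl⟩
    exact ⟨by rw [← mul_nsmul', hcomm, mul_nsmul', ht, nsmul_zero], htS⟩
  · rintro ⟨hg, hgS⟩
    obtain ⟨t, rfl⟩ := hdiv d hd g
    obtain ⟨u, hu⟩ := hdiv _ he (m • t)
    have hdu : d • u = 0 := by
      rw [hd', mul_nsmul, hu, ← mul_nsmul', ← hcomm, mul_nsmul', hg]
    have hmu : m • d.gcdB m • u = m • t := by
      have hbezout := congrArg (fun z : ℤ => z • u) (Nat.gcd_eq_gcd_ab d m)
      simp only [add_smul, natCast_zsmul, hu, mul_comm (d : ℤ), mul_comm (m : ℤ), mul_smul,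
        hdu, smul_zero, zero_add] at hbezout
      rw [hbezout, smul_comm]
    have hdBu : d • d.gcdB m • u = 0 := by rw [smul_comm, hdu, smul_zero]
    refine ⟨t - d.gcdB m • u, ⟨?_, ?_⟩, ?_⟩
    · rw [nsmul_sub, hmu, sub_self]
    · rwa [nsmul_sub, hdBu, sub_zero]
    · rw [nsmul_sub, hdBu, sub_zero]

theorem gcd_mul_left_eq_gcd_mul_gcd {d m : ℕ} (hd : 0 < d) (n : ℕ) :
    (d * n).gcd m = d.gcd m * n.gcd (m / d.gcd m) := by
  have he : 0 < d.gcd m := Nat.gcd_pos_of_pos_left _ hd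
  obtain ⟨g, d', m', hg, hcop, rfl, rfl⟩ := Nat.exists_coprime' he
  have hgcd : (d' * g).gcd (m' * g) = g := by rw [Nat.gcd_mul_right, hcop.gcd_eq_one, one_mul]
  rw [hgcd, Nat.mul_div_cancel _ hg, mul_right_comm, Nat.gcd_mul_right,
    hcop.gcd_mul_left_cancel, mul_comm]

theorem ker_nsmul_inf_ker_nsmul {T : Type*} [AddCommGroup T] (d m : ℕ) :
    (nsmulAddMonoidHom d : T →+ T).ker ⊓ (nsmulAddMonoidHom m).ker =
      (nsmulAddMonoidHom (d.gcd m)).ker := by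
  ext t
  simp only [AddSubgroup.mem_inf, AddMonoidHom.mem_ker, nsmulAddMonoidHom_apply,
    ← addOrderOf_dvd_iff_nsmul_eq_zero, Nat.dvd_gcd_iff]

end TorsionCounting

/-- Corollary 3.7 (group-theoretic content): the preimage of `G₀ ≅ (ℤ/nℤ)⁴` under
multiplication by `d` on a divisible group `T` with `T[m] ≅ (ℤ/mℤ)⁸` for all `m` is
isomorphic to `(ℤ/dnℤ)⁴ × (ℤ/dℤ)⁴`. -/
theorem preimage_under_smul_iso
    (T : Type*) [AddCommGroup T]
    (hdiv : ∀ m : ℕ, 0 < m → ∀ t : T, ∃ u : T, m • u = t)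
    (htor : ∀ m : ℕ, 0 < m → Nonempty (torsionSub (m : ℤ) T ≃+ (Fin 8 → ZMod m)))
    (n d : ℕ) (hn : 1 ≤ n) (hd : 1 ≤ d)
    (G₀ : AddSubgroup T) (hG₀ : Nonempty (G₀ ≃+ (Fin 4 → ZMod n))) :
    Nonempty (↥(AddSubgroup.comap (smulHom (d : ℤ) T) G₀) ≃+
      ((Fin 4 → ZMod (d * n)) × (Fin 4 → ZMod d))) := by
  obtain ⟨e₀⟩ := hG₀
  have hd0 : d ≠ 0 := by omega
  have hn0 : n ≠ 0 := by omega
  have htor_eq (m : ℕ) : torsionSub (m : ℤ) T = (nsmulAddMonoidHom m : T →+ T).ker := by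
    ext t
    change (m : ℤ) • t = 0 ↔ m • t = 0
    rw [natCast_zsmul]
  have hcomap : AddSubgroup.comap (smulHom (d : ℤ) T) G₀ =
      AddSubgroup.comap (nsmulAddMonoidHom d) G₀ := by
    ext t
    change (d : ℤ) • t ∈ G₀ ↔ d • t ∈ G₀
    rw [natCast_zsmul]
  rw [hcomap]
  have hcardT (m : ℕ) (hm : 0 < m) : Nat.card (nsmulAddMonoidHom m : T →+ T).ker = m ^ 8 := by
    obtain ⟨e⟩ := htor m hm
    rw [← htor_eq, Nat.card_congr e.toEquiv, Nat.card_pi]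
    simp
  have hcardG₀ (m : ℕ) :
      Nat.card ((nsmulAddMonoidHom m : T →+ T).ker ⊓ G₀ : AddSubgroup T) = n.gcd m ^ 4 := by
    rw [AddSubgroup.card_nsmul_ker_inf, card_nsmul_ker_congr e₀,
      card_nsmul_ker_pi_zmod_const _ _ _ hn0]
  have hle : AddSubgroup.comap (nsmulAddMonoidHom d) G₀ ≤
      (nsmulAddMonoidHom (d * n) : T →+ T).ker := by
    intro t (ht : d • t ∈ G₀)
    have hz : n • (⟨d • t, ht⟩ : G₀) = 0 := by
      apply e₀.injective
      rw [map_nsmul, map_zero]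
      funext i
      simp
    change (d * n) • t = 0
    rw [mul_nsmul]
    exact congrArg Subtype.val hz
  have : Finite (nsmulAddMonoidHom (d * n) : T →+ T).ker :=
    Nat.finite_of_card_ne_zero <| by
      rw [hcardT _ (by positivity)]
      positivity
  have : Finite (AddSubgroup.comap (nsmulAddMonoidHom d) G₀) :=
    Finite.of_injective _ (AddSubgroup.inclusion_injective hle)
  have : NeZero d := ⟨hd0⟩
  have : NeZero n := ⟨hn0⟩
  refine nonempty_addEquiv_of_card_nsmul_ker_eq fun m _ => ?_
  have hker : (nsmulAddMonoidHom d : T →+ T).ker ⊓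
      ((nsmulAddMonoidHom m).ker ⊓ G₀.comap (nsmulAddMonoidHom d)) =
        (nsmulAddMonoidHom (d.gcd m)).ker := by
    rw [← ker_nsmul_inf_ker_nsmul, inf_left_comm,
      inf_eq_left.2 (AddMonoidHom.ker_le_comap (nsmulAddMonoidHom d) G₀), inf_comm]
  rw [← AddSubgroup.card_nsmul_ker_inf,
    AddSubgroup.card_eq_card_map_mul_card_inf_ker (nsmulAddMonoidHom d),
    map_nsmul_ker_inf_comap hdiv G₀ hd, hcardG₀, hker,
    hcardT _ (Nat.gcd_pos_of_pos_left _ hd), card_nsmul_ker_prod,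
    card_nsmul_ker_pi_zmod_const _ _ _ (mul_ne_zero hd0 hn0),
    card_nsmul_ker_pi_zmod_const _ _ _ hd0, gcd_mul_left_eq_gcd_mul_gcd hd]
  ring
end
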